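/- The Hosoya index of the path graph on d vertices equals the (d+1)-st Fibonacci number; more generally, the Hosoya index of the caterpillar C(a_1,...,a_d) equals the continuant K(a_1,...,a_d). -/

import Mathlib

def contK : List ℕ → ℕ
  | [] => 1
  | [a] => a
  | a :: b :: l => a * contK (b :: l) + contK l

noncomputable def hosoya {V : Type} (G : SimpleGraph V) : ℕ :=
  {M : Finset (Sym2 V) | ↑M ⊆ G.edgeSet ∧
    ∀ e ∈ M, ∀ f ∈ M, e ≠ f → ∀ v : V, v ∈ e → v ∉ f}.ncard

def caterpillar {d : ℕ} (a : Fin d → ℕ) : SimpleGraph ((i : Fin d) × Fin (a i)) :=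
  SimpleGraph.fromRel (fun v w =>
    (v.1 = w.1 ∧ v.2.val = 0 ∧ w.2.val ≠ 0) ∨
    ((w.1 : ℕ) = (v.1 : ℕ) + 1 ∧ v.2.val = 0 ∧ w.2.val = 0))

/-- A set of pairwise disjoint edges. -/
def IsM {V : Type} (M : Finset (Sym2 V)) : Prop :=
  ∀ e ∈ M, ∀ f ∈ M, e ≠ f → ∀ v : V, v ∈ e → v ∉ f

open Classical in
/-- Number of matchings contained in a finite set of edges. -/
noncomputable def mcount {V : Type} (E : Finset (Sym2 V)) : ℕ :=
  (E.powerset.filter IsM).card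

lemma hosoya_eq_mcount {V : Type} (G : SimpleGraph V) (E : Finset (Sym2 V))
    (h : ∀ e, e ∈ E ↔ e ∈ G.edgeSet) : hosoya G = mcount E := by
  classical
  unfold hosoya mcount
  rw [← Set.ncard_coe_finset]
  congr 1
  ext M
  simp only [Set.mem_ofPred_eq, Finset.coe_filter, Finset.mem_powerset]
  refine and_congr_left fun _ => ?_
  constructor
  · intro hM e he
    exact (h e).2 (hM he)
  · intro hM e he
    exact (h e).1 (hM he)

lemma mcount_empty {V : Type} : mcount (∅ : Finset (Sym2 V)) = 1 := by
  classical
  simp [mcount, Finset.filter_singleton, IsM]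

lemma mcount_star {V : Type} [DecidableEq V] (E : Finset (Sym2 V)) (v : V) (N : Finset V)
    (hN : ∀ w, s(v, w) ∈ E ↔ w ∈ N) :
    mcount E = mcount (E.filter (fun e => v ∉ e)) +
      ∑ w ∈ N, mcount (E.filter (fun e => v ∉ e ∧ w ∉ e)) := by
  classical
  unfold mcount
  have key : (E.powerset.filter IsM) =
      ((E.filter (fun e => v ∉ e)).powerset.filter IsM) ∪
      N.biUnion (fun w =>
        ((E.filter (fun e => v ∉ e ∧ w ∉ e)).powerset.filter IsM).image (insert s(v, w))) := by
    ext M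
    simp only [Finset.mem_filter, Finset.mem_union, Finset.mem_biUnion, Finset.mem_image,
      Finset.mem_powerset, Finset.subset_iff]
    constructor
    · rintro ⟨hM, hp⟩
      by_cases hv : ∀ e ∈ M, v ∉ e
      · exact Or.inl ⟨fun e he => ⟨hM he, hv e he⟩, hp⟩
      · right
        push Not at hv
        obtain ⟨e, he, hve⟩ := hv
        obtain ⟨w, rfl⟩ := Sym2.mem_iff_exists.1 hve
        refine ⟨w, (hN w).1 (hM he), M.erase s(v, w), ⟨?_, ?_⟩, Finset.insert_erase he⟩
        · intro f hf
          rw [Finset.mem_erase] at hf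
          refine ⟨hM hf.2, ?_, ?_⟩
          · exact hp _ he _ hf.2 hf.1.symm _ (by simp)
          · exact hp _ he _ hf.2 hf.1.symm _ (by simp)
        · intro e he f hf
          exact hp e (Finset.mem_of_mem_erase he) f (Finset.mem_of_mem_erase hf)
    · rintro (⟨hM, hp⟩ | ⟨w, hw, M, ⟨hM, hp⟩, rfl⟩)
      · exact ⟨fun e he => (hM he).1, hp⟩
      · refine ⟨?_, ?_⟩
        · intro e he
          rcases Finset.mem_insert.1 he with rfl | he
          · exact (hN w).2 hw
          · exact (hM he).1
        · intro e he f hf hef u hue huf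
          rcases Finset.mem_insert.1 he with rfl | he1 <;>
            rcases Finset.mem_insert.1 hf with rfl | hf1
          · exact hef rfl
          · rcases Sym2.mem_iff.1 hue with rfl | rfl
            · exact (hM hf1).2.1 huf
            · exact (hM hf1).2.2 huf
          · rcases Sym2.mem_iff.1 huf with rfl | rfl
            · exact (hM he1).2.1 hue
            · exact (hM he1).2.2 hue
          · exact hp e he1 f hf1 hef u hue huf
  rw [key, Finset.card_union_of_disjoint, Finset.card_biUnion]
  · congr 1
    refine Finset.sum_congr rfl fun w _ => ?_
    apply Finset.card_image_of_injOn
    intro M hM M' hM' h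
    simp only [Finset.coe_filter, Finset.mem_powerset, Set.mem_ofPred_eq, Finset.subset_iff,
      Finset.mem_filter] at hM hM'
    have h1 : s(v, w) ∉ M := fun h => (hM.1 h).2.1 (by simp)
    have h2 : s(v, w) ∉ M' := fun h => (hM'.1 h).2.1 (by simp)
    have h3 : insert s(v, w) M = insert s(v, w) M' := h
    rw [← Finset.erase_insert h1, h3, Finset.erase_insert h2]
  · intro w _ w' _ hww
    rw [Function.onFun, Finset.disjoint_left]
    intro M hM hM'
    simp only [Finset.mem_image, Finset.mem_filter, Finset.mem_powerset,
      Finset.subset_iff] at hM hM'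
    obtain ⟨A, ⟨hA, _⟩, rfl⟩ := hM
    obtain ⟨B, ⟨hB, _⟩, hAB⟩ := hM'
    have : s(v, w) ∈ insert s(v, w') B := by rw [hAB]; simp
    rcases Finset.mem_insert.1 this with h | h
    · exact hww (Sym2.congr_right.1 h)
    · exact (hB h).2.1 (by simp)
  · rw [Finset.disjoint_left]
    intro M hM hM'
    simp only [Finset.mem_biUnion, Finset.mem_image, Finset.mem_filter, Finset.mem_powerset,
      Finset.subset_iff] at hM hM'
    obtain ⟨w, _, A, _, rfl⟩ := hM'
    exact (hM.1 (Finset.mem_insert_self _ _)).2 (by simp)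

open Classical in
/-- Edges of `G` all of whose endpoints have level at least `i`. -/
noncomputable def lev {V : Type} [Fintype V] (G : SimpleGraph V) (p : V → ℕ) (i : ℕ) :
    Finset (Sym2 V) :=
  Finset.univ.filter (fun e => e ∈ G.edgeSet ∧ ∀ u ∈ e, i ≤ p u)

lemma mk_mem_lev {V : Type} [Fintype V] (G : SimpleGraph V) (p : V → ℕ) (i : ℕ) (x y : V) :
    s(x, y) ∈ lev G p i ↔ G.Adj x y ∧ i ≤ p x ∧ i ≤ p y := by
  simp [lev]

lemma hosoya_lev {V : Type} [Fintype V] (G : SimpleGraph V) (p : V → ℕ) :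
    hosoya G = mcount (lev G p 0) :=
  hosoya_eq_mcount _ _ (by simp [lev])

lemma lev_top {V : Type} [Fintype V] (G : SimpleGraph V) (p : V → ℕ) (i : ℕ)
    (h : ∀ v, p v < i) : mcount (lev G p i) = 1 := by
  have : lev G p i = ∅ := by
    ext e
    induction e with | _ x y =>
    rw [mk_mem_lev]
    have := h x
    simp; omega
  rw [this, mcount_empty]

lemma path_step {d : ℕ} (i : ℕ) (hi : i + 1 < d) :
    mcount (lev (SimpleGraph.pathGraph d) (fun v => v.val) i) =
      mcount (lev (SimpleGraph.pathGraph d) (fun v => v.val) (i+1)) +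
      mcount (lev (SimpleGraph.pathGraph d) (fun v => v.val) (i+2)) := by
  rw [mcount_star _ (⟨i, by omega⟩ : Fin d) {⟨i+1, hi⟩}]
  · rw [Finset.sum_singleton]
    congr 2
    · ext e
      induction e with | _ x y =>
      simp only [Finset.mem_filter, mk_mem_lev, Sym2.mem_iff, SimpleGraph.pathGraph_adj,
        Fin.ext_iff]
      omega
    · ext e
      induction e with | _ x y =>
      simp only [Finset.mem_filter, mk_mem_lev, Sym2.mem_iff, SimpleGraph.pathGraph_adj,
        Fin.ext_iff]
      omega
  · intro w
    simp only [mk_mem_lev, SimpleGraph.pathGraph_adj, Finset.mem_singleton, Fin.ext_iff]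
    omega

lemma path_last {d : ℕ} (i : ℕ) (hi : d ≤ i + 1) :
    mcount (lev (SimpleGraph.pathGraph d) (fun v => v.val) i) = 1 := by
  have : lev (SimpleGraph.pathGraph d) (fun v => v.val) i = ∅ := by
    ext e
    induction e with | _ x y =>
    simp only [mk_mem_lev, SimpleGraph.pathGraph_adj, Finset.notMem_empty, iff_false]
    omega
  rw [this, mcount_empty]

lemma path_all (d : ℕ) : ∀ k i, i + k = d →
    mcount (lev (SimpleGraph.pathGraph d) (fun v => v.val) i) = Nat.fib (k + 1) := by
  intro k
  induction k using Nat.strong_induction_on with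
  | _ k ih =>
    intro i hik
    match k, ih, hik with
    | 0, _, h => rw [path_last i (by omega)]; rfl
    | 1, _, h => rw [path_last i (by omega)]; rfl
    | k+2, ih, h =>
      rw [path_step i (by omega), ih (k+1) (by omega) (i+1) (by omega),
        ih k (by omega) (i+2) (by omega), Nat.fib_add_two (n := k+1), add_comm]

/-- Abstract adjacency facts for the caterpillar. -/
lemma cat_adj {d : ℕ} (a : Fin d → ℕ) (x y : (i : Fin d) × Fin (a i)) :
    (caterpillar a).Adj x y ↔
      (x.1.val = y.1.val ∧ x.2.val = 0 ∧ y.2.val ≠ 0) ∨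
      (x.1.val = y.1.val ∧ y.2.val = 0 ∧ x.2.val ≠ 0) ∨
      (y.1.val = x.1.val + 1 ∧ x.2.val = 0 ∧ y.2.val = 0) ∨
      (x.1.val = y.1.val + 1 ∧ x.2.val = 0 ∧ y.2.val = 0) := by
  have hne : x = y → x.1.val = y.1.val ∧ x.2.val = y.2.val := by
    rintro rfl; exact ⟨rfl, rfl⟩
  simp only [caterpillar, SimpleGraph.fromRel_adj, Fin.ext_iff, ne_eq]
  constructor
  · rintro ⟨_, h⟩
    omega
  · intro h
    refine ⟨fun e => ?_, by omega⟩
    have := hne e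
    omega

lemma sig_ext {d : ℕ} (a : Fin d → ℕ) (x y : (i : Fin d) × Fin (a i)) :
    x = y ↔ x.1.val = y.1.val ∧ x.2.val = y.2.val := by
  constructor
  · rintro rfl; exact ⟨rfl, rfl⟩
  · obtain ⟨i, x⟩ := x
    obtain ⟨j, y⟩ := y
    rintro ⟨h1, h2⟩
    obtain rfl : i = j := Fin.ext h1
    obtain rfl : x = y := Fin.ext h2
    rfl

open Classical in
/-- The leaves at spine position `i`. -/
noncomputable def leaves {d : ℕ} (a : Fin d → ℕ) (i : Fin d) (h : 0 < a i) :
    Finset ((i : Fin d) × Fin (a i)) :=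
  (Finset.univ.erase (⟨0, h⟩ : Fin (a i))).map (Function.Embedding.sigmaMk i)

lemma card_leaves {d : ℕ} (a : Fin d → ℕ) (i : Fin d) (h : 0 < a i) :
    (leaves a i h).card = a i - 1 := by
  simp [leaves]

lemma mem_leaves {d : ℕ} (a : Fin d → ℕ) (i : Fin d) (h : 0 < a i)
    (x : (i : Fin d) × Fin (a i)) :
    x ∈ leaves a i h ↔ x.1.val = i.val ∧ x.2.val ≠ 0 := by
  obtain ⟨j, x⟩ := x
  constructor
  · intro hx
    simp only [leaves, Finset.mem_map, Finset.mem_erase] at hx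
    obtain ⟨y, ⟨hy, _⟩, hxy⟩ := hx
    have h1 := (sig_ext a _ _).1 hxy
    have h2 : y.val = x.val := h1.2
    have h3 : y.val ≠ 0 := fun e => hy (Fin.ext e)
    exact ⟨h1.1.symm, by simp only; omega⟩
  · rintro ⟨h1, h2⟩
    obtain rfl : j = i := Fin.ext h1
    simp only [leaves, Finset.mem_map, Finset.mem_erase]
    exact ⟨x, ⟨fun e => h2 (by simp [e]), Finset.mem_univ _⟩, rfl⟩

lemma cat_del {d : ℕ} (a : Fin d → ℕ) (i : Fin d) (h : 0 < a i) (e) :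
    (e ∈ lev (caterpillar a) (fun v => v.1.val) i.val ∧
      (⟨i, ⟨0, h⟩⟩ : (i : Fin d) × Fin (a i)) ∉ e) ↔
    e ∈ lev (caterpillar a) (fun v => v.1.val) (i.val+1) := by
  induction e with | _ x y =>
  simp only [mk_mem_lev, Sym2.mem_iff, cat_adj, sig_ext]
  omega

lemma cat_del_leaf {d : ℕ} (a : Fin d → ℕ) (i : Fin d) (h : 0 < a i)
    (w) (hw : w ∈ leaves a i h) (e) :
    (e ∈ lev (caterpillar a) (fun v => v.1.val) i.val ∧
      (⟨i, ⟨0, h⟩⟩ : (i : Fin d) × Fin (a i)) ∉ e ∧ w ∉ e) ↔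
    e ∈ lev (caterpillar a) (fun v => v.1.val) (i.val+1) := by
  rw [mem_leaves] at hw
  constructor
  · rintro ⟨h1, h2, _⟩
    exact (cat_del a i h e).1 ⟨h1, h2⟩
  · intro he
    have h1 := (cat_del a i h e).2 he
    refine ⟨h1.1, h1.2, fun hwe => ?_⟩
    simp only [lev, Finset.mem_filter] at he
    have := he.2.2 w hwe
    omega

lemma cat_del_spine {d : ℕ} (a : Fin d → ℕ) (i j : Fin d) (hij : j.val = i.val + 1)
    (h : 0 < a i) (h' : 0 < a j) (e) :
    (e ∈ lev (caterpillar a) (fun v => v.1.val) i.val ∧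
      (⟨i, ⟨0, h⟩⟩ : (i : Fin d) × Fin (a i)) ∉ e ∧
      (⟨j, ⟨0, h'⟩⟩ : (i : Fin d) × Fin (a i)) ∉ e) ↔
    e ∈ lev (caterpillar a) (fun v => v.1.val) (i.val+2) := by
  induction e with | _ x y =>
  simp only [mk_mem_lev, Sym2.mem_iff, cat_adj, sig_ext]
  omega

lemma cat_leaf_sum {d : ℕ} (a : Fin d → ℕ) (i : Fin d) (h : 0 < a i) (n : ℕ) :
    n + (a i - 1) * n = a i * n := by
  obtain ⟨k, hk⟩ : ∃ k, a i = k + 1 := ⟨a i - 1, by omega⟩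
  rw [hk, Nat.add_sub_cancel]; ring

lemma cat_last {d : ℕ} (a : Fin d → ℕ) (i : Fin d) (h : 0 < a i) (hi : i.val + 1 = d) :
    mcount (lev (caterpillar a) (fun v => v.1.val) i.val) = a i := by
  have h1 : mcount (lev (caterpillar a) (fun v => v.1.val) (i.val+1)) = 1 :=
    lev_top _ _ _ (fun v => by have := v.1.isLt; omega)
  rw [mcount_star _ (⟨i, ⟨0, h⟩⟩ : (i : Fin d) × Fin (a i)) (leaves a i h)]
  · rw [Finset.sum_congr rfl (g := fun _ => 1)]
    · rw [Finset.sum_const, card_leaves, ← h1]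
      have : Finset.filter (fun e => (⟨i, ⟨0, h⟩⟩ : (i : Fin d) × Fin (a i)) ∉ e)
        (lev (caterpillar a) (fun v => v.1.val) i.val) =
          lev (caterpillar a) (fun v => v.1.val) (i.val+1) := by
        ext e; rw [Finset.mem_filter, cat_del]
      rw [this, h1, smul_eq_mul]
      omega
    · intro w hw
      rw [← h1]
      congr 1
      ext e; rw [Finset.mem_filter, cat_del_leaf a i h w hw]
  · intro w
    have := w.1.isLt
    simp only [mk_mem_lev, cat_adj, mem_leaves]
    simp only [true_and, ne_eq, not_true, and_false, false_or, le_refl]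
    omega

lemma cat_step {d : ℕ} (a : Fin d → ℕ) (i j : Fin d) (hij : j.val = i.val + 1)
    (h : 0 < a i) (h' : 0 < a j) :
    mcount (lev (caterpillar a) (fun v => v.1.val) i.val) =
      a i * mcount (lev (caterpillar a) (fun v => v.1.val) (i.val+1)) +
      mcount (lev (caterpillar a) (fun v => v.1.val) (i.val+2)) := by
  have hnot : (⟨j, ⟨0, h'⟩⟩ : (i : Fin d) × Fin (a i)) ∉ leaves a i h := by
    rw [mem_leaves]; simp
  rw [mcount_star _ (⟨i, ⟨0, h⟩⟩ : (i : Fin d) × Fin (a i))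
    (insert ⟨j, ⟨0, h'⟩⟩ (leaves a i h))]
  · rw [Finset.sum_insert hnot, Finset.sum_congr rfl
      (g := fun _ => mcount (lev (caterpillar a) (fun v => v.1.val) (i.val+1)))]
    · rw [Finset.sum_const, card_leaves, smul_eq_mul, ← cat_leaf_sum a i h]
      have e1 : Finset.filter (fun e => (⟨i, ⟨0, h⟩⟩ : (i : Fin d) × Fin (a i)) ∉ e)
        (lev (caterpillar a) (fun v => v.1.val) i.val) =
          lev (caterpillar a) (fun v => v.1.val) (i.val+1) := by
        ext e; rw [Finset.mem_filter, cat_del]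
      have e2 : Finset.filter (fun e => (⟨i, ⟨0, h⟩⟩ : (i : Fin d) × Fin (a i)) ∉ e ∧
          (⟨j, ⟨0, h'⟩⟩ : (i : Fin d) × Fin (a i)) ∉ e)
        (lev (caterpillar a) (fun v => v.1.val) i.val) =
          lev (caterpillar a) (fun v => v.1.val) (i.val+2) := by
        ext e; rw [Finset.mem_filter, cat_del_spine a i j hij]
      rw [e1, e2]
      omega
    · intro w hw
      congr 1
      ext e; rw [Finset.mem_filter, cat_del_leaf a i h w hw]
  · intro w
    simp only [mk_mem_lev, cat_adj, mem_leaves, Finset.mem_insert, sig_ext]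
    simp only [true_and, ne_eq, not_true, and_false, false_or, le_refl]
    omega

lemma cat_all {d : ℕ} (a : Fin d → ℕ) (ha : ∀ i, 0 < a i) : ∀ k i, i + k = d →
    mcount (lev (caterpillar a) (fun v => v.1.val) i) = contK ((List.ofFn a).drop i) := by
  intro k
  induction k using Nat.strong_induction_on with
  | _ k ih =>
    intro i hik
    match k, ih, hik with
    | 0, _, h =>
      rw [lev_top _ _ _ (fun v => by have := v.1.isLt; omega),
        List.drop_eq_nil_of_le (by simp; omega)]
      rfl
    | 1, _, h =>
      rw [cat_last a ⟨i, by omega⟩ (ha _) (by simpa using h),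
        List.drop_eq_getElem_cons (by simp; omega),
        List.drop_eq_nil_of_le (by simp; omega)]
      simp [contK]
    | k+2, ih, h =>
      rw [cat_step a ⟨i, by omega⟩ ⟨i+1, by omega⟩ rfl (ha _) (ha _)]
      simp only
      rw [ih (k+1) (by omega) (i+1) (by omega),
        ih k (by omega) (i+2) (by omega),
        List.drop_eq_getElem_cons (i := i) (by simp; omega),
        List.drop_eq_getElem_cons (i := i+1) (by simp; omega)]
      simp [contK]

theorem hosoya_path_and_caterpillar :
    (∀ d : ℕ, hosoya (SimpleGraph.pathGraph d) = Nat.fib (d + 1)) ∧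
    (∀ (d : ℕ) (a : Fin d → ℕ), (∀ i, 0 < a i) →
      hosoya (caterpillar a) = contK (List.ofFn a)) := by
  refine ⟨fun d => ?_, fun d a ha => ?_⟩
  · rw [hosoya_lev _ (fun v => v.val), path_all d d 0 (by omega)]
  · rw [hosoya_lev _ (fun v => v.1.val), cat_all a ha d 0 (by omega), List.drop_zero]
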